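/- arXiv:2109.12031 — 2 statements merged into one kernel-verified Lean document; each statement's English description precedes it below -/
import Mathlib

section
/- Let M ⊆ M_{ℓ,r}(ℂ) be a TRO (M M* M ⊆ M) such that M* M spans ⊕_{j=1}^k M_{r_j}(ℂ) (block-diagonally embedded in M_r(ℂ), with r = r₁ + ⋯ + r_k) and M M* spans ⊕_{i=1}^m M_{ℓ_i}(ℂ) (block-diagonally embedded in M_ℓ(ℂ), with ℓ = ℓ₁ + ⋯ + ℓ_m). Then k = m, and there exist N = k and surjective maps g : {1,…,r} → {1,…,N} and f : {1,…,ℓ} → {1,…,N} (constant on the respective blocks) such that M = { a ∈ M_{ℓ,r}(ℂ) : a_{ij} = 0 whenever f(i) ≠ g(j) }. -/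
open Matrix

/-!
A left and right module over the diagonal matrices contains `a i j • E i j` for each of its elements
`a`, so a TRO whose two algebras contain the diagonal is the space of all matrices supported on some
relation `R` between rows and columns. The algebras are then supported on the relations "related to
a common row" and "related to a common column", and the identity
`E i j * (E i' j)ᴴ * E i' j' = E i j'` makes `R` difunctional. A difunctional relation is a
bijection between the classes of its rows and the classes of its columns.
-/

section Combinatorics

variable {α m n I J : Type*}

theorem exists_equiv_of_surjective_of_apply_eq_iff {f : α → I} {g : α → J}
    (hf : f.Surjective) (hg : g.Surjective) (h : ∀ x y, f x = f y ↔ g x = g y) :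
    ∃ e : I ≃ J, ∀ x, e (f x) = g x := by
  refine ⟨.ofBijective (g ∘ f.surjInv hf) ⟨fun c d hcd ↦ ?_, fun d ↦ ?_⟩,
    fun x ↦ (h _ x).1 (f.surjInv_eq hf _)⟩
  · simpa only [f.surjInv_eq hf] using (h _ _).2 hcd
  · obtain ⟨x, rfl⟩ := hg d
    exact ⟨f x, (h _ x).1 (f.surjInv_eq hf _)⟩

theorem exists_equiv_of_difunctional {R : m → n → Prop} {γ : m → I} {β : n → J}
    (hγ : γ.Surjective) (hβ : β.Surjective)
    (hR : ∀ ⦃i j i' j'⦄, R i j → R i' j → R i' j' → R i j')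
    (hγR : ∀ i i', γ i = γ i' ↔ ∃ j, R i j ∧ R i' j)
    (hβR : ∀ j j', β j = β j' ↔ ∃ i, R i j ∧ R i j') :
    ∃ e : I ≃ J, ∀ i j, R i j ↔ e (γ i) = β j := by
  have exists_col (i : m) : ∃ j, R i j := ((hγR i i).1 rfl).imp fun _ ↦ And.left
  choose φ hφ using exists_col
  have rel_iff (i : m) (j : n) : R i j ↔ β (φ i) = β j := by
    refine ⟨fun hij ↦ (hβR _ _).2 ⟨i, hφ i, hij⟩, fun h ↦ ?_⟩
    obtain ⟨i', hi'φ, hi'j⟩ := (hβR _ _).1 h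
    exact hR (hφ i) hi'φ hi'j
  have surjective_βφ : (β ∘ φ).Surjective := fun d ↦ by
    obtain ⟨j, rfl⟩ := hβ d
    obtain ⟨i, hij, -⟩ := (hβR j j).1 rfl
    exact ⟨i, (rel_iff i j).1 hij⟩
  have γ_eq_iff (i i' : m) : γ i = γ i' ↔ β (φ i) = β (φ i') := by
    refine ⟨fun h ↦ ?_, fun h ↦ (hγR _ _).2 ⟨φ i', (rel_iff _ _).2 h, hφ i'⟩⟩
    obtain ⟨j, hij, hi'j⟩ := (hγR _ _).1 h
    exact ((rel_iff i j).1 hij).trans ((rel_iff i' j).1 hi'j).symm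
  obtain ⟨e, he⟩ := exists_equiv_of_surjective_of_apply_eq_iff hγ surjective_βφ γ_eq_iff
  exact ⟨e, fun i j ↦ by rw [rel_iff, he, Function.comp_apply]⟩

end Combinatorics

section SupportedOn

variable {K m n : Type*}

/-- The submodule of matrices whose entries vanish outside the relation `R`. For
`R j j' := β j = β j'` these are the block-diagonal matrices of the labelling `β` of the indices. -/
def supportedOn (K : Type*) [Semiring K] (R : m → n → Prop) : Submodule K (Matrix m n K) where
  carrier := {a | ∀ i j, ¬R i j → a i j = 0}
  add_mem' ha hb i j h := by rw [Matrix.add_apply, ha i j h, hb i j h, add_zero]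
  zero_mem' _ _ _ := rfl
  smul_mem' c a ha i j h := by rw [Matrix.smul_apply, ha i j h, smul_zero]

variable [Semiring K] {R : m → n → Prop}

theorem conjTranspose_mem_supportedOn_flip [StarRing K] {a : Matrix m n K}
    (ha : a ∈ supportedOn K R) : aᴴ ∈ supportedOn K (flip R) := fun j i h ↦ by
  rw [conjTranspose_apply, ha i j h, star_zero]

theorem single_one_mem_supportedOn_iff [DecidableEq m] [DecidableEq n] [Nontrivial K]
    {i : m} {j : n} :
    single i j (1 : K) ∈ supportedOn K R ↔ R i j := by
  refine ⟨fun h ↦ by_contra fun hij ↦ one_ne_zero (α := K) ?_, fun hij i' j' h ↦ ?_⟩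
  · simpa only [single_apply_same] using h i j hij
  · exact single_apply_of_ne _ _ _ _ _ (by rintro ⟨rfl, rfl⟩; exact h hij)

theorem supportedOn_injective [Nontrivial K] :
    Function.Injective (supportedOn K : (m → n → Prop) → Submodule K (Matrix m n K)) :=
  fun R S h ↦ funext₂ fun i j ↦ propext <| by
    classical
    rw [← single_one_mem_supportedOn_iff (K := K) (R := R), h, single_one_mem_supportedOn_iff]

variable [Finite m] [Finite n] [DecidableEq m] [DecidableEq n]

theorem supportedOn_le_of_single_one_mem {M : Submodule K (Matrix m n K)}
    (h : ∀ i j, R i j → single i j 1 ∈ M) : supportedOn K R ≤ M := by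
  intro a ha
  have := Fintype.ofFinite m
  have := Fintype.ofFinite n
  rw [matrix_eq_sum_single a]
  refine M.sum_mem fun i _ ↦ M.sum_mem fun j _ ↦ ?_
  by_cases hij : R i j
  · simpa only [smul_single, smul_eq_mul, mul_one] using M.smul_mem (a i j) (h i j hij)
  · simp only [ha i j hij, single_zero, M.zero_mem]

theorem eq_supportedOn_of_single_apply_mem {K : Type*} [DivisionRing K]
    {M : Submodule K (Matrix m n K)} (h : ∀ a ∈ M, ∀ i j, single i j (a i j) ∈ M) :
    M = supportedOn K fun i j ↦ single i j 1 ∈ M := by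
  refine le_antisymm (fun a ha i j hij ↦ ?_) (supportedOn_le_of_single_one_mem fun _ _ ↦ id)
  by_contra haij
  apply hij
  simpa only [smul_single, smul_eq_mul, inv_mul_cancel₀ haij]
    using M.smul_mem (a i j)⁻¹ (h a ha i j)

end SupportedOn

section TRO

variable {K m n : Type*}

/-- `M` is a ternary ring of operators: it is closed under the triple product `a * bᴴ * c`. -/
def IsTRO [Fintype m] [Fintype n] [Semiring K] [StarRing K]
    (M : Submodule K (Matrix m n K)) : Prop :=
  ∀ a ∈ M, ∀ b ∈ M, ∀ c ∈ M, a * bᴴ * c ∈ M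

/-- The span `[M* M]`; for a TRO `M` it is an algebra acting on `M` from the right. -/
def rightAlgebra [Fintype m] [Semiring K] [StarRing K] (M : Submodule K (Matrix m n K)) :
    Submodule K (Matrix n n K) :=
  .span K {x | ∃ a ∈ M, ∃ b ∈ M, x = aᴴ * b}

/-- The span `[M M*]`; for a TRO `M` it is an algebra acting on `M` from the left. -/
def leftAlgebra [Fintype n] [Semiring K] [StarRing K] (M : Submodule K (Matrix m n K)) :
    Submodule K (Matrix m m K) :=
  .span K {x | ∃ a ∈ M, ∃ b ∈ M, x = a * bᴴ}

section Semiring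

variable [Semiring K] [StarRing K] {R : m → n → Prop}

theorem rightAlgebra_supportedOn [Fintype m] [Finite n] [Nontrivial K] :
    rightAlgebra (supportedOn K R) = supportedOn K fun j j' ↦ ∃ i, R i j ∧ R i j' := by
  classical
  apply le_antisymm
  · refine Submodule.span_le.2 ?_
    rintro _ ⟨a, ha, b, hb, rfl⟩ j j' h
    refine Finset.sum_eq_zero fun i _ ↦ ?_
    change star (a i j) * b i j' = 0
    by_cases hij : R i j
    · rw [hb i j' fun hij' ↦ h ⟨i, hij, hij'⟩, mul_zero]
    · rw [ha i j hij, star_zero, zero_mul]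
  · refine supportedOn_le_of_single_one_mem fun j j' ⟨i, hij, hij'⟩ ↦ Submodule.subset_span
      ⟨single i j 1, single_one_mem_supportedOn_iff.2 hij,
        single i j' 1, single_one_mem_supportedOn_iff.2 hij', ?_⟩
    rw [conjTranspose_single, star_one, single_mul_single_same, mul_one]

theorem leftAlgebra_supportedOn_eq_rightAlgebra_flip [Fintype n] :
    leftAlgebra (supportedOn K R) = rightAlgebra (supportedOn K (flip R)) := by
  refine congrArg (Submodule.span K) (Set.ext fun x ↦ ⟨?_, ?_⟩)
  · rintro ⟨a, ha, b, hb, rfl⟩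
    exact ⟨aᴴ, conjTranspose_mem_supportedOn_flip ha, bᴴ, conjTranspose_mem_supportedOn_flip hb,
      by rw [conjTranspose_conjTranspose]⟩
  · rintro ⟨a, ha, b, hb, rfl⟩
    exact ⟨aᴴ, conjTranspose_mem_supportedOn_flip ha, bᴴ, conjTranspose_mem_supportedOn_flip hb,
      by rw [conjTranspose_conjTranspose]⟩

theorem leftAlgebra_supportedOn [Finite m] [Fintype n] [Nontrivial K] :
    leftAlgebra (supportedOn K R) = supportedOn K fun i i' ↦ ∃ j, R i j ∧ R i' j :=
  leftAlgebra_supportedOn_eq_rightAlgebra_flip.trans rightAlgebra_supportedOn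

theorem IsTRO.difunctional_of_supportedOn [Fintype m] [Fintype n] [Nontrivial K]
    (h : IsTRO (supportedOn K R)) ⦃i : m⦄ ⦃j : n⦄ ⦃i' : m⦄ ⦃j' : n⦄
    (hij : R i j) (hi'j : R i' j) (hi'j' : R i' j') : R i j' := by
  classical
  rw [← single_one_mem_supportedOn_iff (K := K) (R := R)] at hij hi'j hi'j' ⊢
  simpa only [conjTranspose_single, star_one, single_mul_single_same, mul_one]
    using h _ hij _ hi'j _ hi'j'

end Semiring

namespace IsTRO

variable [Fintype m] [Fintype n]

theorem mul_mem_of_mem_leftAlgebra [Semiring K] [StarRing K] {M : Submodule K (Matrix m n K)}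
    (hM : IsTRO M) {x : Matrix m m K} {c : Matrix m n K} (hx : x ∈ leftAlgebra M) (hc : c ∈ M) :
    x * c ∈ M := by
  suffices leftAlgebra M ≤ M.comap (mulRightLinearMap m K c) from this hx
  refine Submodule.span_le.2 ?_
  rintro _ ⟨a, ha, b, hb, rfl⟩
  exact hM a ha b hb c hc

theorem mul_mem_of_mem_rightAlgebra [CommSemiring K] [StarRing K] {M : Submodule K (Matrix m n K)}
    (hM : IsTRO M) {c : Matrix m n K} {x : Matrix n n K} (hc : c ∈ M) (hx : x ∈ rightAlgebra M) :
    c * x ∈ M := by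
  suffices rightAlgebra M ≤ M.comap (mulLeftLinearMap n K c) from this hx
  refine Submodule.span_le.2 ?_
  rintro _ ⟨a, ha, b, hb, rfl⟩
  change c * (aᴴ * b) ∈ M
  rw [← Matrix.mul_assoc]
  exact hM c hc a ha b hb

variable [DecidableEq m] [DecidableEq n]

theorem exists_eq_supportedOn [Field K] [StarRing K] {M : Submodule K (Matrix m n K)}
    (hM : IsTRO M) (hr : ∀ j, single j j 1 ∈ rightAlgebra M)
    (hl : ∀ i, single i i 1 ∈ leftAlgebra M) : ∃ R, M = supportedOn K R := by
  refine ⟨_, eq_supportedOn_of_single_apply_mem fun a ha i j ↦ ?_⟩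
  have corner_mem : single i i (1 : K) * a * single j j (1 : K) ∈ M :=
    hM.mul_mem_of_mem_rightAlgebra (hM.mul_mem_of_mem_leftAlgebra (hl i) ha) (hr j)
  simpa only [single_mul_mul_single, one_mul, mul_one] using corner_mem

end IsTRO

theorem stmt_10_general {I J : Type*} [Fintype m] [Fintype n] [Field K] [StarRing K]
    {M : Submodule K (Matrix m n K)} (hM : IsTRO M)
    {β : n → J} (hβ : β.Surjective) {γ : m → I} (hγ : γ.Surjective)
    (hr : rightAlgebra M = supportedOn K fun j j' ↦ β j = β j')
    (hl : leftAlgebra M = supportedOn K fun i i' ↦ γ i = γ i') :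
    ∃ e : I ≃ J, M = supportedOn K fun i j ↦ e (γ i) = β j := by
  classical
  obtain ⟨R, rfl⟩ : ∃ R, M = supportedOn K R := hM.exists_eq_supportedOn
    (fun j ↦ hr ▸ single_one_mem_supportedOn_iff.2 rfl)
    (fun i ↦ hl ▸ single_one_mem_supportedOn_iff.2 rfl)
  rw [rightAlgebra_supportedOn] at hr
  rw [leftAlgebra_supportedOn] at hl
  obtain ⟨e, he⟩ := exists_equiv_of_difunctional hγ hβ hM.difunctional_of_supportedOn
    (fun i i' ↦ (congrFun₂ (supportedOn_injective hl) i i').symm.to_iff)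
    (fun j j' ↦ (congrFun₂ (supportedOn_injective hr) j j').symm.to_iff)
  exact ⟨e, congrArg _ (funext₂ fun i j ↦ propext (he i j))⟩

end TRO

/-- A TRO `M ⊆ M_{ℓ,r}(ℂ)` whose right algebra `span(M* M)` is the block algebra
determined by a block assignment `β : Fin r → Fin k` and whose left algebra
`span(M M*)` is the block algebra determined by `γ : Fin ℓ → Fin m` satisfies `k = m`,
and `M` consists exactly of the matrices supported on pairs of blocks matched by
surjections `f, g` onto `Fin k` (constant on the respective blocks). -/
theorem stmt_10 {l r k m : ℕ}
    (M : Submodule ℂ (Matrix (Fin l) (Fin r) ℂ))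
    (hTRO : ∀ a ∈ M, ∀ b ∈ M, ∀ c ∈ M, a * bᴴ * c ∈ M)
    (β : Fin r → Fin k) (hβ : Function.Surjective β)
    (γ : Fin l → Fin m) (hγ : Function.Surjective γ)
    (hMM : ((Submodule.span ℂ {x : Matrix (Fin r) (Fin r) ℂ |
        ∃ a ∈ M, ∃ b ∈ M, x = aᴴ * b}) : Set (Matrix (Fin r) (Fin r) ℂ))
      = {x | ∀ j j', β j ≠ β j' → x j j' = 0})
    (hMMl : ((Submodule.span ℂ {x : Matrix (Fin l) (Fin l) ℂ |
        ∃ a ∈ M, ∃ b ∈ M, x = a * bᴴ}) : Set (Matrix (Fin l) (Fin l) ℂ))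
      = {x | ∀ i i', γ i ≠ γ i' → x i i' = 0}) :
    k = m ∧ ∃ (g : Fin r → Fin k) (f : Fin l → Fin k),
      Function.Surjective g ∧ Function.Surjective f ∧
      (∀ j j', β j = β j' → g j = g j') ∧
      (∀ i i', γ i = γ i' → f i = f i') ∧
      (M : Set (Matrix (Fin l) (Fin r) ℂ)) = {a | ∀ i j, f i ≠ g j → a i j = 0} := by
  obtain ⟨e, he⟩ :=
    stmt_10_general hTRO hβ hγ (SetLike.coe_injective hMM) (SetLike.coe_injective hMMl)
  exact ⟨(Fin.equiv_iff_eq.1 ⟨e⟩).symm, β, e ∘ γ, hβ, e.surjective.comp hγ, fun _ _ h ↦ h,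
    fun _ _ h ↦ congrArg e h, congrArg SetLike.coe he⟩
end

section
/- Let S ⊆ M_d(ℂ) be an operator system (a self-adjoint subspace containing I_d) that acts irreducibly, in the sense that there is no non-trivial subspace L ⊆ ℂ^d that is reducing for S and such that the compression map s ↦ P_L s |_L is completely isometric on S. Suppose the C*-algebra generated by S is ⊕_{j=1}^n M_{d_j}(ℂ) (block diagonal, d₁ + ⋯ + d_n = d). If Φ is a surjective *-homomorphism from C*(S) onto a C*-algebra B that is completely isometric on S, then Φ is injective; equivalently, the Šilov ideal of S in C*(S) is zero, so C*_env(S) = C*(S). -/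
open Matrix

/-- The operator (spectral) norm of a square complex matrix, via its action on
Euclidean space. -/
noncomputable def opN {m : Type*} [Fintype m] [DecidableEq m] (A : Matrix m m ℂ) : ℝ :=
  ‖(Matrix.toEuclideanCLM (𝕜 := ℂ) A : EuclideanSpace ℂ m →L[ℂ] EuclideanSpace ℂ m)‖

/-!
An ideal of the finite-dimensional C*-algebra `T = C*(S)` is generated by a central projection, so
`Φ` has a support projection: a central projection `p` of `T` with `Φ p = 1` and
`Φ a = 0 ↔ p * a = 0`. If `Φ` is completely isometric on `S`, then
`‖s‖ = ‖Φ s‖ = ‖Φ (p s p)‖ ≤ ‖p s p‖ ≤ ‖s‖` for every matrix `s` over `S`, so the compression of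
`S` to the reducing subspace `ran p` is completely isometric. Irreducibility leaves `p = 0`,
excluded because `Φ 1 ≠ 0`, or `p = 1`, in which case `Φ` is injective.
-/

section Ideals

theorem exists_forall_mul_eq_self (J : Type*) [NonUnitalCStarAlgebra J] [FiniteDimensional ℂ J] :
    ∃ e : J, ∀ x, e * x = x := by
  let _ : PartialOrder J := CStarAlgebra.spectralOrder J
  have : StarOrderedRing J := CStarAlgebra.spectralOrderedRing J
  have : ProperSpace J := FiniteDimensional.proper ℂ J
  have hl := CStarAlgebra.increasingApproximateUnit J
  obtain ⟨e, -, he⟩ := isCompact_closedBall (0 : J) 1 (Filter.le_principal_iff.2 hl.closedBall_mem)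
  -- `e * x` is a cluster point of `u * x` along the approximate unit, which converges to `x`.
  refine ⟨e, fun x ↦ eq_of_nhds_neBot ?_⟩
  exact he.map (continuous_mul_const x).continuousAt (hl.tendsto_mul_right x)

variable {A : Type*} [CStarAlgebra A]

theorem exists_isStarProjection_forall_mem_iff (J : NonUnitalStarSubalgebra ℂ A)
    [FiniteDimensional ℂ J] (hJ : ∀ a, ∀ x ∈ J, a * x ∈ J) :
    ∃ e : A, IsStarProjection e ∧ (∀ a, Commute e a) ∧ ∀ x, x ∈ J ↔ e * x = x := by
  have : IsClosed (J : Set A) :=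
    Submodule.closed_of_finiteDimensional J.toNonUnitalSubalgebra.toSubmodule
  have hJ' : ∀ a, ∀ x ∈ J, x * a ∈ J := fun a x hx ↦ by
    simpa using star_mem (hJ (star a) _ (star_mem hx))
  obtain ⟨⟨e, heJ⟩, he⟩ := exists_forall_mul_eq_self J
  have left_id : ∀ x ∈ J, e * x = x := fun x hx ↦ congrArg Subtype.val (he ⟨x, hx⟩)
  have right_id : ∀ x ∈ J, x * star e = x := fun x hx ↦ by
    simpa using congrArg star (left_id _ (star_mem hx))
  have star_e : star e = e := (left_id _ (star_mem heJ)).symm.trans (right_id e heJ)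
  refine ⟨e, ⟨left_id e heJ, star_e⟩, fun a ↦ ?_, fun x ↦ ⟨left_id x, fun hx ↦ hx ▸ hJ' x e heJ⟩⟩
  calc e * a = e * a * e := by simpa only [star_e] using (right_id _ (hJ' a e heJ)).symm
    _ = a * e := by rw [mul_assoc, left_id _ (hJ a e heJ)]

theorem exists_isStarProjection_forall_map_eq_zero_iff [FiniteDimensional ℂ A] {B : Type*}
    [Ring B] [StarRing B] [Algebra ℂ B] [StarModule ℂ B] (Φ : A →⋆ₐ[ℂ] B) :
    ∃ p : A, IsStarProjection p ∧ (∀ a, Commute p a) ∧ ∀ a, Φ a = 0 ↔ p * a = 0 := by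
  let J : NonUnitalStarSubalgebra ℂ A := (⊥ : NonUnitalStarSubalgebra ℂ B).comap Φ
  have mem_J : ∀ a, a ∈ J ↔ Φ a = 0 := fun _ ↦ NonUnitalStarAlgebra.mem_bot
  have : FiniteDimensional ℂ J :=
    inferInstanceAs (FiniteDimensional ℂ J.toNonUnitalSubalgebra.toSubmodule)
  obtain ⟨e, he, hcomm, hker⟩ := exists_isStarProjection_forall_mem_iff J
    fun a x hx ↦ by rw [mem_J] at hx ⊢; rw [map_mul, hx, mul_zero]
  refine ⟨1 - e, he.one_sub, fun a ↦ (Commute.one_left a).sub_left (hcomm a), fun a ↦ ?_⟩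
  rw [← mem_J, hker, sub_mul, one_mul, sub_eq_zero, eq_comm]

end Ideals

section CompleteIsometries

variable {A B : Type*} [CStarAlgebra A] [PartialOrder A] [StarOrderedRing A]
  [CStarAlgebra B] [PartialOrder B] [StarOrderedRing B] {n : Type*} [Fintype n]

theorem norm_map_conj_le {p : A} (hp : IsStarProjection p) (a : CStarMatrix n n A) :
    ‖a.map (fun x ↦ p * x * p)‖ ≤ ‖a‖ := by
  classical
  let P : CStarMatrix n n A := CStarMatrix.ofMatrix (diagonal fun _ ↦ p)
  have hP : IsStarProjection P :=
    { isIdempotentElem := (diagonal_mul_diagonal _ _).trans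
        (congrArg diagonal (funext fun _ ↦ hp.isIdempotentElem))
      isSelfAdjoint := (diagonal_conjTranspose _).trans
        (congrArg diagonal (funext fun _ ↦ hp.isSelfAdjoint)) }
  have hconj : a.map (fun x ↦ p * x * p) = P * a * P := by
    ext i j
    exact ((mul_diagonal _ _ i j).trans
      (congrArg (· * p) (diagonal_mul _ (CStarMatrix.ofMatrix.symm a) i j))).symm
  have hP1 : ‖P‖ ≤ 1 := hP.norm_le
  calc ‖a.map (fun x ↦ p * x * p)‖ ≤ ‖P‖ * ‖a‖ * ‖P‖ := hconj ▸ norm_mul₃_le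
    _ ≤ 1 * ‖a‖ * 1 := by gcongr
    _ = ‖a‖ := by ring

theorem norm_map_le_norm_map_coe (T : StarSubalgebra ℂ A) [IsClosed (T : Set A)]
    (Φ : T →⋆ₐ[ℂ] B) (a : CStarMatrix n n T) : ‖a.map Φ‖ ≤ ‖a.map ((↑) : T → A)‖ := by
  let _ : PartialOrder T := CStarAlgebra.spectralOrder T
  have : StarOrderedRing T := CStarAlgebra.spectralOrderedRing T
  let Φn : CStarMatrix n n T →⋆ₙₐ[ℂ] CStarMatrix n n B :=
    CStarMatrix.mapₙₐ Φ.toNonUnitalStarAlgHom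
  let ιn : CStarMatrix n n T →⋆ₙₐ[ℂ] CStarMatrix n n A :=
    CStarMatrix.mapₙₐ T.subtype.toNonUnitalStarAlgHom
  have hιn : Function.Injective ιn := CStarMatrix.map_injective Subtype.val_injective
  calc ‖Φn a‖ ≤ ‖a‖ := NonUnitalStarAlgHom.norm_apply_le Φn a
    _ = ‖ιn a‖ := (NonUnitalStarAlgHom.norm_map ιn hιn a).symm

/-- A map defined on a subset `S` of a C*-algebra is completely isometric if applying it entrywise
preserves the norm of every square matrix with entries in `S`. Since `φ` is not required to be
linear, this covers both *-homomorphisms and compressions restricted to an operator system. -/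
def IsCompleteIsometry {S : Set A} (φ : S → B) : Prop :=
  ∀ (n : ℕ) (a : CStarMatrix (Fin n) (Fin n) S), ‖a.map φ‖ = ‖a.map ((↑) : S → A)‖

/-- Irreducibility of an operator system relative to completely isometric compressions: `S` may
have nontrivial reducing subspaces, but compressing to one is never completely isometric. Reducing
subspaces are encoded by the projections `p` commuting with `S`, and the compression to `ran p` by
`s ↦ p * s * p`, which has the same matrix norms. -/
def ActsIrreducibly (S : Set A) : Prop :=
  ∀ p : A, IsStarProjection p → (∀ s ∈ S, Commute p s) →
    IsCompleteIsometry (fun s : S ↦ p * s * p) → p = 0 ∨ p = 1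

theorem IsCompleteIsometry.coe_eq_zero {S : Set A} {φ : S → B} (hφ : IsCompleteIsometry φ) {s : S}
    (hs : φ s = 0) : (s : A) = 0 := by
  let a : CStarMatrix (Fin 1) (Fin 1) S := CStarMatrix.ofMatrix fun _ _ ↦ s
  have hφa : a.map φ = 0 := CStarMatrix.ext fun _ _ ↦ hs
  have ha : a.map ((↑) : S → A) = 0 := by rw [← norm_eq_zero, ← hφ, hφa, norm_zero]
  exact congrFun (congrFun ha 0) 0

variable {S : Set A} {T : StarSubalgebra ℂ A} {Φ : T →⋆ₐ[ℂ] B}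

theorem IsCompleteIsometry.conj_of_map_eq_one [IsClosed (T : Set A)] (hST : S ⊆ T)
    (hΦ : IsCompleteIsometry fun s : S ↦ Φ ⟨s, hST s.2⟩) {p : T} (hp : IsStarProjection p)
    (hΦp : Φ p = 1) : IsCompleteIsometry fun s : S ↦ (p : A) * s * p := by
  intro n a
  let b : CStarMatrix (Fin n) (Fin n) T := a.map (Set.inclusion hST)
  have hΦb : (b.map fun x ↦ p * x * p).map Φ = b.map Φ := by
    ext i j
    simp [hΦp]
  refine le_antisymm (norm_map_conj_le (hp.map T.subtype) (a.map (↑))) ?_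
  calc ‖a.map ((↑) : S → A)‖ = ‖b.map Φ‖ := (hΦ n a).symm
    _ = ‖(b.map fun x ↦ p * x * p).map Φ‖ := by rw [hΦb]
    _ ≤ ‖(b.map fun x ↦ p * x * p).map ((↑) : T → A)‖ := norm_map_le_norm_map_coe T Φ _

theorem stmt_17_general [FiniteDimensional ℂ T] (hST : S ⊆ T) (h1 : 1 ∈ S)
    (hS : ActsIrreducibly S) (hΦ : IsCompleteIsometry fun s : S ↦ Φ ⟨s, hST s.2⟩) :
    Function.Injective Φ := by
  have : IsClosed (T : Set A) :=
    Submodule.closed_of_finiteDimensional T.toSubalgebra.toSubmodule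
  obtain ⟨p, hp, hcomm, hker⟩ := exists_isStarProjection_forall_map_eq_zero_iff Φ
  have hΦp : Φ p = 1 := by
    have h0 : Φ (1 - p) = 0 := (hker _).2 hp.mul_one_sub_self
    rwa [map_sub, map_one, sub_eq_zero, eq_comm] at h0
  have hpS : ∀ s ∈ S, Commute (p : A) s := fun s hs ↦ (hcomm ⟨s, hST hs⟩).map T.subtype
  refine (injective_iff_map_eq_zero Φ).2 fun a ha ↦ ?_
  rcases hS p (hp.map T.subtype) hpS (hΦ.conj_of_map_eq_one hST hp hΦp) with hp0 | hp1
  · have hp0 : p = 0 := Subtype.ext hp0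
    have h10 : (1 : A) = 0 := hΦ.coe_eq_zero (s := ⟨1, h1⟩) ((hker 1).2 (by rw [hp0, zero_mul]))
    exact Subtype.ext (eq_zero_of_zero_eq_one h10.symm _)
  · have hp1 : p = 1 := Subtype.ext hp1
    rwa [hker, hp1, one_mul] at ha

end CompleteIsometries

section Matrices

open scoped MatrixOrder Matrix.Norms.L2Operator

variable {m n k : Type*} [Fintype m] [Fintype n] [Fintype k] [DecidableEq n]

theorem kroneckerMap_one_mul_mul_eq_of (p : Matrix m m ℂ) (a : Matrix (n × m) (n × m) ℂ) :
    kroneckerMap (· * ·) (1 : Matrix n n ℂ) p * a * kroneckerMap (· * ·) (1 : Matrix n n ℂ) p =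
      of fun u v ↦ (p * (of fun x y ↦ a (u.1, x) (v.1, y)) * p) u.2 v.2 := by
  ext ⟨i, x⟩ ⟨j, y⟩
  simp [mul_apply, Fintype.sum_prod_type, one_apply]

variable [DecidableEq m] [DecidableEq k]

/-- Flattening of a matrix of matrices, as an isomorphism of C*-algebras. It identifies the norm of
`CStarMatrix n n (Matrix m m ℂ)` with the spectral norm on `ℂⁿ ⊗ ℂᵐ`. -/
def compStarAlgEquiv (n m : Type*) [Fintype n] [Fintype m] [DecidableEq n] [DecidableEq m] :
    CStarMatrix n n (Matrix m m ℂ) ≃⋆ₐ[ℂ] Matrix (n × m) (n × m) ℂ :=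
  .ofAlgEquiv (compAlgEquiv n m ℂ ℂ) fun _ ↦ rfl

theorem opN_of_eq_norm (a : CStarMatrix n n (Matrix m m ℂ)) :
    opN (of fun u v : n × m ↦ a u.1 v.1 u.2 v.2) = ‖a‖ :=
  StarAlgEquiv.norm_map (compStarAlgEquiv n m) a

theorem isCompleteIsometry_matrix_iff {S : Set (Matrix m m ℂ)} {φ : S → Matrix k k ℂ} :
    IsCompleteIsometry φ ↔ ∀ (n : ℕ) (a : Matrix (Fin n × m) (Fin n × m) ℂ)
      (ha : ∀ i j, (of fun x y ↦ a (i, x) (j, y)) ∈ S),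
      opN a = opN (of fun u v : Fin n × k ↦ φ ⟨_, ha u.1 v.1⟩ u.2 v.2) := by
  refine forall_congr' fun n ↦ ⟨fun h a ha ↦ ?_, fun h a ↦ ?_⟩
  · have hb := h (CStarMatrix.ofMatrix fun i j ↦ ⟨_, ha i j⟩)
    rw [← opN_of_eq_norm, ← opN_of_eq_norm] at hb
    exact hb.symm
  · rw [← opN_of_eq_norm, ← opN_of_eq_norm]
    exact (h (of fun u v ↦ (a u.1 v.1 : Matrix m m ℂ) u.2 v.2) fun i j ↦ (a i j).2).symm

theorem actsIrreducibly_matrix_iff {S : Set (Matrix m m ℂ)} :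
    ActsIrreducibly S ↔ ¬ ∃ p : Matrix m m ℂ, p ≠ 0 ∧ p ≠ 1 ∧ p * p = p ∧ pᴴ = p ∧
      (∀ s ∈ S, p * s = s * p) ∧
      ∀ (n : ℕ) (a : Matrix (Fin n × m) (Fin n × m) ℂ),
        (∀ i j, (of fun x y ↦ a (i, x) (j, y)) ∈ S) →
        opN a = opN (kroneckerMap (· * ·) (1 : Matrix (Fin n) (Fin n) ℂ) p * a *
          kroneckerMap (· * ·) (1 : Matrix (Fin n) (Fin n) ℂ) p) := by
  have isStarProjection_iff' (p : Matrix m m ℂ) : IsStarProjection p ↔ p * p = p ∧ pᴴ = p :=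
    isStarProjection_iff p
  rw [not_exists]
  refine forall_congr' fun p ↦ ?_
  simp only [isStarProjection_iff', commute_iff_eq, isCompleteIsometry_matrix_iff,
    kroneckerMap_one_mul_mul_eq_of]
  tauto

end Matrices

/-- An irreducibly acting operator system `S ⊆ M_d(ℂ)` whose generated C*-algebra is a
direct sum of full matrix blocks has trivial Šilov ideal: every *-homomorphism `Φ`
from `C*(S)` (into a C*-algebra of matrices, hence onto a C*-algebra `B = ran Φ`)
that is completely isometric on `S` is injective; i.e. `C*_env(S) = C*(S)`. -/
theorem stmt_17 {d : ℕ}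
    (S : Submodule ℂ (Matrix (Fin d) (Fin d) ℂ))
    (hS1 : (1 : Matrix (Fin d) (Fin d) ℂ) ∈ S)
    (hSstar : ∀ s ∈ S, sᴴ ∈ S)
    -- `S` acts irreducibly: no nontrivial reducing projection `p` such that the
    -- compression `s ↦ p s p` is completely isometric on `S`.
    (hirr : ¬ ∃ p : Matrix (Fin d) (Fin d) ℂ, p ≠ 0 ∧ p ≠ 1 ∧ p * p = p ∧ pᴴ = p ∧
      (∀ s ∈ S, p * s = s * p) ∧
      (∀ (n : ℕ) (a : Matrix (Fin n × Fin d) (Fin n × Fin d) ℂ),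
        (∀ i j : Fin n, (Matrix.of fun x y => a (i, x) (j, y)) ∈ S) →
        opN a = opN (Matrix.kroneckerMap (· * ·) (1 : Matrix (Fin n) (Fin n) ℂ) p * a *
          Matrix.kroneckerMap (· * ·) (1 : Matrix (Fin n) (Fin n) ℂ) p)))
    -- the C*-algebra generated by `S` is the block-diagonal algebra `⊕_j M_{d_j}`
    -- determined by the surjective block assignment `β`.
    {nb : ℕ} (β : Fin d → Fin nb) (hβ : Function.Surjective β)
    (hCS : ((StarAlgebra.adjoin ℂ (S : Set (Matrix (Fin d) (Fin d) ℂ))) :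
        Set (Matrix (Fin d) (Fin d) ℂ))
      = {a | ∀ x y, β x ≠ β y → a x y = 0}) :
    ∀ (e : ℕ)
      (Φ : StarAlgebra.adjoin ℂ (S : Set (Matrix (Fin d) (Fin d) ℂ)) →⋆ₐ[ℂ]
        Matrix (Fin e) (Fin e) ℂ),
      (∀ (n : ℕ) (a : Matrix (Fin n × Fin d) (Fin n × Fin d) ℂ)
        (ha : ∀ i j : Fin n, (Matrix.of fun x y => a (i, x) (j, y)) ∈ S),
        opN a = opN (Matrix.of fun pq uv : Fin n × Fin e =>
          Φ ⟨Matrix.of fun x y => a (pq.1, x) (uv.1, y),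
              StarAlgebra.subset_adjoin ℂ _ (ha pq.1 uv.1)⟩ pq.2 uv.2)) →
      Function.Injective Φ := by
  have := FiniteDimensional.finiteDimensional_subalgebra
    (StarAlgebra.adjoin ℂ (S : Set (Matrix (Fin d) (Fin d) ℂ))).toSubalgebra
  open scoped MatrixOrder Matrix.Norms.L2Operator in
  exact fun e Φ hΦ ↦ stmt_17_general (StarAlgebra.subset_adjoin ℂ _) hS1
    (actsIrreducibly_matrix_iff.2 hirr) (isCompleteIsometry_matrix_iff.2 hΦ)
end
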